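/- arXiv:2604.14462 — 2 statements merged into one kernel-verified Lean document; each statement's English description precedes it below -/
import Mathlib

section
/- Define u_{m,n} = |NC(U_{m,n})| for (m,n) ≠ (0,0) and u_{0,0} = 0. In the ring of formal power series ℤ⟦X, Y⟧ in two variables, the generating function U(X,Y) = Σ_{m,n ≥ 0} u_{m,n} X^m Y^n satisfies (1 − 2X − 2Y + 3XY) · U(X,Y) = X + Y − 2XY. -/
open Finset

/-- A finpartition of a finite set of points in the plane is *noncrossing* if the
convex hulls (over `ℝ`) of its blocks are pairwise disjoint. -/
def IsNoncrossing {P : Finset ℂ} (π : Finpartition P) : Prop :=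
  (π.parts : Set (Finset ℂ)).Pairwise fun B₁ B₂ =>
    Disjoint (convexHull ℝ (B₁ : Set ℂ)) (convexHull ℝ (B₂ : Set ℂ))

/-- The poset `NC(P)` of noncrossing partitions of `P`, ordered by refinement:
`π ≤ μ` iff every block of `μ` is a union of blocks of `π`. -/
abbrev NC (P : Finset ℂ) : Type := {π : Finpartition P // IsNoncrossing π}

/-- The blocks of a noncrossing partition. -/
def NC.parts {P : Finset ℂ} (π : NC P) : Finset (Finset ℂ) := π.1.parts

/-- Two points lie in a common block of a noncrossing partition. -/
def NC.SameBlock {P : Finset ℂ} (π : NC P) (a b : ℂ) : Prop :=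
  ∃ B ∈ π.parts, a ∈ B ∧ b ∈ B

/-- The open cone configuration `U_{m,n} = {1, …, m} ∪ {i, 2i, …, ni} ⊆ ℂ`. -/
noncomputable def Uconfig (m n : ℕ) : Finset ℂ :=
  ((Finset.Icc 1 m).image fun j : ℕ => (j : ℂ)) ∪
    ((Finset.Icc 1 n).image fun k : ℕ => (k : ℂ) * Complex.I)

/-- `u_{m,n} = |NC(U_{m,n})|` for `(m,n) ≠ (0,0)`, and `u_{0,0} = 0`. -/
noncomputable def useq (m n : ℕ) : ℤ :=
  if m = 0 ∧ n = 0 then 0 else (Nat.card (NC (Uconfig m n)) : ℤ)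

/-- The bivariate generating function `U(X,Y) = Σ u_{m,n} X^m Y^n` in `ℤ⟦X,Y⟧`, where
the variable `X` is `MvPowerSeries.X 0` and `Y` is `MvPowerSeries.X 1`. -/
noncomputable def Useries : MvPowerSeries (Fin 2) ℤ := fun d => useq (d 0) (d 1)

/-!
Let the rays point in linearly independent directions `v i`. If `0 < a ≤ b` and `0 < c ≤ d`, the
segments from `b • v i` to `c • v j` and from `a • v i` to `d • v j` meet; so the hulls of two
blocks `B` and `C` meet as soon as some point of `C` lies below a point of `B` on its ray and some
point of `B` lies below a point of `C` on its ray. Otherwise one of the two blocks precedes the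
other on every ray they share, and a linear functional separates them. Being noncrossing is
therefore a property of the poset formed by the rays, a disjoint union of chains.

Let `S` and `T` be the generating functions of those noncrossing partitions in which the outermost
point of the first, respectively second, ray is the greatest element of its block. Removing that
point leaves an arbitrary partition if it was a singleton, and otherwise a partition in which the
next point inwards is the greatest element of its block: `S = X (1 + U + S)`, `T = Y (1 + U + T)`.
A partition counted by neither `S` nor `T` has both outermost points in one block, and cutting this
block into its two rays turns the partitions of that kind into the ones counted by both. Hence
`U = S + T`, and the theorem follows by eliminating `S` and `T`.
-/

section OrderNoncrossing

variable {α : Type*}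

/-- A setoid on an ordered type is *order-noncrossing* if the relation between classes `B`, `C` that
some element of `B` is `≤` some element of `C` is antisymmetric. -/
def OrderNoncrossing [LE α] (r : Setoid α) : Prop :=
  ∀ ⦃p p' q q'⦄, r p p' → r q q' → q ≤ p → p' ≤ q' → r p q

/-- A setoid is *supported on* `s` if every element outside `s` forms a class of its own. Setoids
supported on `s` encode the partitions of `s`, all of them on the same ambient type. -/
def SupportedOn (r : Setoid α) (s : Set α) : Prop :=
  ∀ ⦃p q⦄, r p q → p ∉ s → p = q

/-- The order-noncrossing partitions of a subset `s` of a poset, encoded as setoids supported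
on `s`. -/
def noncrossingOn [LE α] (s : Set α) : Set (Setoid α) :=
  {r | OrderNoncrossing r ∧ SupportedOn r s}

/-- The order-noncrossing partitions of `s` in which `x` is the greatest element of its block. -/
def noncrossingWithTop [LE α] (s : Set α) (x : α) : Set (Setoid α) :=
  {r ∈ noncrossingOn s | ∀ ⦃q⦄, r x q → q ≤ x}

/-- The setoid obtained from `r` by declaring `M` a single class; `M` is meant to be a union of
classes of `r`. -/
def mergeClasses (r : Setoid α) (M : Set α) : Setoid α where
  r p q := (p ∈ M ∧ q ∈ M) ∨ (p ∉ M ∧ q ∉ M ∧ r p q)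
  iseqv :=
    { refl := fun p => by by_cases hp : p ∈ M <;> simp [hp]
      symm := by
        rintro p q (⟨hp, hq⟩ | ⟨hp, hq, h⟩)
        exacts [Or.inl ⟨hq, hp⟩, Or.inr ⟨hq, hp, r.symm h⟩]
      trans := by
        rintro p q t (⟨hp, hq⟩ | ⟨hp, hq, h⟩) (⟨hq', ht⟩ | ⟨hq', ht, h'⟩)
        exacts [Or.inl ⟨hp, ht⟩, absurd hq hq', absurd hq' hq, Or.inr ⟨hp, ht, r.trans h h'⟩] }

lemma mergeClasses_apply {r : Setoid α} {M : Set α} {p q : α} :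
    mergeClasses r M p q ↔ (p ∈ M ∧ q ∈ M) ∨ (p ∉ M ∧ q ∉ M ∧ r p q) := Iff.rfl

/-- The setoid obtained from `r` by cutting every class into the part inside `M` and the part
outside. -/
def splitClasses (r : Setoid α) (M : Set α) : Setoid α := r ⊓ Setoid.ker (· ∈ M)

lemma splitClasses_apply {r : Setoid α} {M : Set α} {p q : α} :
    splitClasses r M p q ↔ r p q ∧ (p ∈ M ↔ q ∈ M) := by
  rw [splitClasses, Setoid.inf_iff_and, Setoid.ker_def, eq_iff_iff]

lemma splitClasses_le {r : Setoid α} {M : Set α} : splitClasses r M ≤ r := inf_le_left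

namespace SupportedOn

variable {r r' : Setoid α} {s t : Set α} {p q : α}

lemma mono (h : SupportedOn r s) (hst : s ⊆ t) : SupportedOn r t :=
  fun _ _ hpq hp => h hpq fun hs => hp (hst hs)

lemma anti (h : SupportedOn r s) (hr : r' ≤ r) : SupportedOn r' s :=
  fun _ _ hpq hp => h (hr hpq) hp

lemma mem_of_rel (h : SupportedOn r s) (hpq : r p q) (hp : p ∈ s) : q ∈ s := by
  by_contra hq
  exact hq (h (r.symm hpq) hq ▸ hp)

lemma ext (h : SupportedOn r s) (h' : SupportedOn r' s)
    (heq : ∀ p ∈ s, ∀ q ∈ s, r p q ↔ r' p q) : r = r' := by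
  ext p q
  by_cases hp : p ∈ s <;> by_cases hq : q ∈ s
  · exact heq p hp q hq
  · exact iff_of_false (fun hpq => hq (h.mem_of_rel hpq hp))
      fun hpq => hq (h'.mem_of_rel hpq hp)
  all_goals
    exact ⟨fun hpq => h hpq hp ▸ r'.refl p, fun hpq => h' hpq hp ▸ r.refl p⟩

lemma of_insert {x : α} (h : SupportedOn r (insert x s)) (hx : ∀ q, r x q → x = q) :
    SupportedOn r s := by
  intro p q hpq hp
  obtain rfl | hpx := eq_or_ne p x
  · exact hx q hpq
  · exact h hpq (by simp [hpx, hp])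

end SupportedOn

lemma finite_setOf_supportedOn {s : Set α} (hs : s.Finite) :
    {r : Setoid α | SupportedOn r s}.Finite := by
  refine Set.Finite.of_injOn (f := fun r => {a ∈ s ×ˢ s | r a.1 a.2})
    (fun _ _ => Set.sep_subset _ _) ?_ (hs.prod hs).finite_subsets
  intro r hr r' hr' h
  refine hr.ext hr' fun p hp q hq => ?_
  simpa [hp, hq] using Set.ext_iff.1 h (p, q)

lemma finite_noncrossingOn [LE α] {s : Set α} (hs : s.Finite) : (noncrossingOn s).Finite :=
  (finite_setOf_supportedOn hs).subset fun _ hr => hr.2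

lemma noncrossingWithTop_subset [LE α] (s : Set α) (x : α) :
    noncrossingWithTop s x ⊆ noncrossingOn s := Set.sep_subset _ _

lemma finite_noncrossingWithTop [LE α] {s : Set α} (hs : s.Finite) (x : α) :
    (noncrossingWithTop s x).Finite :=
  (finite_noncrossingOn hs).subset (noncrossingWithTop_subset s x)

namespace OrderNoncrossing

lemma comap {β : Type*} [Preorder α] [Preorder β] {r : Setoid β} (hr : OrderNoncrossing r)
    {f : α → β} (hf : Monotone f) : OrderNoncrossing (r.comap f) :=
  fun _ _ _ _ hp hq hle hle' => hr hp hq (hf hle) (hf hle')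

lemma rel_of_between [LE α] {r : Setoid α} (hr : OrderNoncrossing r) {p q t : α} (hpt : r p t)
    (hpq : p ≤ q) (hqt : q ≤ t) : r q t :=
  r.symm (hr (r.symm hpt) (r.refl q) hqt hpq)

lemma splitClasses [LE α] {r : Setoid α} (hr : OrderNoncrossing r) {M : Set α}
    (hM : ∀ ⦃p q⦄, r p q → q ≤ p → p ∈ M → q ∈ M) : OrderNoncrossing (splitClasses r M) := by
  intro p p' q q' hp hq hle hle'
  rw [splitClasses_apply] at hp hq ⊢
  have hpq : r p q := hr hp.1 hq.1 hle hle'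
  have hqp' : r q' p' := r.trans (r.symm hq.1) (r.trans (r.symm hpq) hp.1)
  exact ⟨hpq, hM hpq hle, fun h => hp.2.2 (hM hqp' hle' (hq.2.1 h))⟩

lemma of_supportedOn [PartialOrder α] {r : Setoid α} {s : Set α} (hs : s.OrdConnected)
    (hr : SupportedOn r s)
    (h : ∀ p ∈ s, ∀ p' ∈ s, ∀ q ∈ s, ∀ q' ∈ s, r p p' → r q q' → q ≤ p → p' ≤ q' → r p q) :
    OrderNoncrossing r := by
  intro p p' q q' hp hq hle hle'
  by_cases hps : p ∈ s <;> by_cases hqs : q ∈ s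
  · exact h p hps p' (hr.mem_of_rel hp hps) q hqs q' (hr.mem_of_rel hq hqs) hp hq hle hle'
  · obtain rfl := hr hq hqs
    exact absurd (hs.out (hr.mem_of_rel hp hps) hps ⟨hle', hle⟩) hqs
  · obtain rfl := hr hp hps
    exact absurd (hs.out hqs (hr.mem_of_rel hq hqs) ⟨hle, hle'⟩) hps
  · obtain rfl := hr hp hps
    obtain rfl := hr hq hqs
    rw [le_antisymm hle hle']

end OrderNoncrossing

lemma noncrossingOn_empty [PartialOrder α] : noncrossingOn (∅ : Set α) = {⊥} := by
  refine Set.eq_singleton_iff_unique_mem.2 ⟨⟨?_, fun _ _ hpq _ => hpq⟩, fun r hr => ?_⟩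
  · rintro p _ q _ rfl rfl hle hle'
    exact le_antisymm hle' hle
  · exact eq_bot_iff.2 fun p q hpq => hr.2 hpq (Set.notMem_empty p)

section AddingATop

variable [PartialOrder α] {s : Set α} {x y : α}

lemma noncrossingWithTop_insert_of_forall_not_lt (hy : y ∉ s) (hmin : ∀ q ∈ s, ¬ q < y) :
    noncrossingWithTop (insert y s) y = noncrossingOn s := by
  ext r
  constructor
  · rintro ⟨⟨hr, hsupp⟩, htop⟩
    refine ⟨hr, hsupp.of_insert fun q hq => ?_⟩
    rcases hsupp.mem_of_rel hq (Set.mem_insert y s) with rfl | hqs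
    · rfl
    · exact (eq_of_le_of_not_lt (htop hq) (hmin q hqs)).symm
  · rintro ⟨hr, hsupp⟩
    exact ⟨⟨hr, hsupp.mono (Set.subset_insert y s)⟩, fun q hq => (hsupp hq hy).ge⟩

lemma noncrossingWithTop_insert (hy : y ∉ s) (hxy : x < y) (hle : ∀ q < y, q ≤ x) :
    noncrossingWithTop (insert y s) y =
      noncrossingOn s ∪ {r ∈ noncrossingWithTop (insert y s) y | r x y} := by
  ext r
  constructor
  · rintro ⟨⟨hr, hsupp⟩, htop⟩
    by_cases hrxy : r x y
    · exact Or.inr ⟨⟨⟨hr, hsupp⟩, htop⟩, hrxy⟩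
    refine Or.inl ⟨hr, hsupp.of_insert fun q hq => ?_⟩
    by_contra hne
    exact hrxy (hr.rel_of_between (r.symm hq) (hle q ((htop hq).lt_of_ne' hne)) hxy.le)
  · rintro (⟨hr, hsupp⟩ | hr)
    · exact ⟨⟨hr, hsupp.mono (Set.subset_insert y s)⟩, fun q hq => (hsupp hq hy).ge⟩
    · exact hr.1

open Classical in
lemma monotone_update_id (hxy : x < y) (hle : ∀ q < y, q ≤ x) :
    Monotone (Function.update id y x) := by
  intro p q hpq
  obtain rfl | hp := eq_or_ne p y <;> obtain rfl | hq := eq_or_ne q p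
  · rfl
  · simpa [hq] using hxy.le.trans hpq
  · rfl
  · obtain rfl | hqy := eq_or_ne q y
    · simpa [hp] using hle p (hpq.lt_of_ne hp)
    · simpa [hp, hqy] using hpq

open Classical in
lemma comap_update_mem (hx : x ∈ s) (hxy : x < y) (hle : ∀ q < y, q ≤ x) {r : Setoid α}
    (hr : r ∈ noncrossingWithTop s x) :
    r.comap (Function.update id y x) ∈
      {r ∈ noncrossingWithTop (insert y s) y | r x y} := by
  obtain ⟨⟨hr, hsupp⟩, htop⟩ := hr
  refine ⟨⟨⟨hr.comap (monotone_update_id hxy hle), fun p q hpq hp => ?_⟩, fun q hq => ?_⟩, ?_⟩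
  · obtain ⟨hpy, hps⟩ : p ≠ y ∧ p ∉ s := by simpa using hp
    rw [Setoid.comap_rel, Function.update_of_ne hpy] at hpq
    have hpq' := hsupp hpq hps
    obtain rfl | hqy := eq_or_ne q y
    · obtain rfl : p = x := by simpa using hpq'
      exact absurd hx hps
    · simpa [hqy] using hpq'
  · obtain rfl | hqy := eq_or_ne q y
    · rfl
    · exact (htop (by simpa [Setoid.comap_rel, hqy] using hq)).trans hxy.le
  · simp [Setoid.comap_rel, hxy.ne]

lemma splitClasses_compl_singleton_mem (hxy : x < y) (hle : ∀ q < y, q ≤ x) {r : Setoid α}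
    (hr : r ∈ {r ∈ noncrossingWithTop (insert y s) y | r x y}) :
    splitClasses r {y}ᶜ ∈ noncrossingWithTop s x := by
  obtain ⟨⟨⟨hr, hsupp⟩, htop⟩, hrxy⟩ := hr
  refine ⟨⟨hr.splitClasses ?_, (hsupp.anti splitClasses_le).of_insert fun q hq => ?_⟩,
    fun q hq => ?_⟩
  · rintro p q hpq hqp hp rfl
    exact hp ((htop (r.symm hpq)).antisymm hqp)
  · simpa [eq_comm] using (splitClasses_apply.1 hq).2
  · obtain ⟨hq, hiff⟩ := splitClasses_apply.1 hq
    exact hle q ((htop (r.trans (r.symm hrxy) hq)).lt_of_ne (hiff.1 hxy.ne))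

open Classical in
/-- `Function.update id y x` sends `y` to `x`, so pulling back along it adjoins `y` to the block of
`x`. -/
lemma bijOn_comap_update (hx : x ∈ s) (hy : y ∉ s) (hxy : x < y) (hle : ∀ q < y, q ≤ x) :
    Set.BijOn (Setoid.comap (Function.update id y x)) (noncrossingWithTop s x)
      {r ∈ noncrossingWithTop (insert y s) y | r x y} := by
  refine Set.InvOn.bijOn (f' := fun r => splitClasses r {y}ᶜ) ⟨?_, ?_⟩
    (fun r => comap_update_mem hx hxy hle) (fun r => splitClasses_compl_singleton_mem hxy hle)
  · intro r hr
    ext p q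
    rw [splitClasses_apply, Setoid.comap_rel]
    have hiso : ∀ ⦃q⦄, r y q → y = q := fun q hq => hr.1.2 hq hy
    obtain rfl | hp := eq_or_ne y p <;> obtain rfl | hq := eq_or_ne y q
    · simp
    · simpa [hq.symm] using mt (@hiso q) hq
    · simpa [hp.symm] using fun h => hp (hiso (r.symm h))
    · simp [hp.symm, hq.symm]
  · rintro r ⟨-, hrxy⟩
    have hne : ∀ p, Function.update id y x p ≠ y := fun p => by
      obtain rfl | hp := eq_or_ne p y
      · simp [hxy.ne]
      · simp [hp]
    have hrel : ∀ p, r (Function.update id y x p) p := fun p => by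
      obtain rfl | hp := eq_or_ne p y
      · simpa using hrxy
      · simp [hp]
    ext p q
    rw [Setoid.comap_rel, splitClasses_apply]
    exact ⟨fun h => r.trans (r.symm (hrel p)) (r.trans h.1 (hrel q)),
      fun h => ⟨r.trans (hrel p) (r.trans h (r.symm (hrel q))), by simp [hne]⟩⟩

lemma ncard_noncrossingWithTop_insert (hs : s.Finite) (hx : x ∈ s) (hy : y ∉ s) (hxy : x < y)
    (hle : ∀ q < y, q ≤ x) :
    (noncrossingWithTop (insert y s) y).ncard =
      (noncrossingOn s).ncard + (noncrossingWithTop s x).ncard := by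
  classical
  have hdisj : Disjoint (noncrossingOn s) {r ∈ noncrossingWithTop (insert y s) y | r x y} :=
    Set.disjoint_left.2 fun r hr hr' => hxy.ne' (hr.2 (r.symm hr'.2) hy)
  rw [noncrossingWithTop_insert hy hxy hle, Set.ncard_union_eq hdisj (finite_noncrossingOn hs)
    ((finite_noncrossingWithTop (hs.insert y) y).subset (Set.sep_subset _ _)),
    ← (bijOn_comap_update hx hy hxy hle).ncard_eq]

end AddingATop

section TwoTops

variable [PartialOrder α] {x y : α}

lemma noncrossingOn_Iic : noncrossingOn (Set.Iic x) = noncrossingWithTop (Set.Iic x) x :=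
  Set.Subset.antisymm (fun _ hr => ⟨hr, fun _ hq => hr.2.mem_of_rel hq le_rfl⟩)
    (noncrossingWithTop_subset _ _)

lemma noncrossingOn_Iic_union_Iic :
    noncrossingOn (Set.Iic x ∪ Set.Iic y) =
      noncrossingWithTop (Set.Iic x ∪ Set.Iic y) x ∪ noncrossingWithTop (Set.Iic x ∪ Set.Iic y) y ∪
        {r ∈ noncrossingOn (Set.Iic x ∪ Set.Iic y) | r x y} := by
  refine Set.Subset.antisymm (fun r hr => ?_)
    (Set.union_subset (Set.union_subset (noncrossingWithTop_subset _ _)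
      (noncrossingWithTop_subset _ _)) (Set.sep_subset _ _))
  by_cases hx : ∀ q, r x q → q ≤ x
  · exact Or.inl (Or.inl ⟨hr, hx⟩)
  by_cases hy : ∀ q, r y q → q ≤ y
  · exact Or.inl (Or.inr ⟨hr, hy⟩)
  push Not at hx hy
  obtain ⟨q, hxq, hqx⟩ := hx
  obtain ⟨p, hyp, hpy⟩ := hy
  have hqy : q ≤ y := (hr.2.mem_of_rel hxq (Or.inl le_rfl)).resolve_left hqx
  have hpx : p ≤ x := (hr.2.mem_of_rel hyp (Or.inr le_rfl)).resolve_right hpy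
  exact Or.inr ⟨hr, r.trans (hr.1 hxq (r.symm hyp) hpx hqy) (r.symm hyp)⟩

lemma disjoint_noncrossingWithTop_joined (hxy : Disjoint (Set.Iic x) (Set.Iic y)) :
    Disjoint
      (noncrossingWithTop (Set.Iic x ∪ Set.Iic y) x ∪ noncrossingWithTop (Set.Iic x ∪ Set.Iic y) y)
      {r ∈ noncrossingOn (Set.Iic x ∪ Set.Iic y) | r x y} := by
  refine Set.disjoint_left.2 ?_
  rintro r (hr | hr) ⟨-, hrxy⟩
  · exact Set.disjoint_left.1 hxy (hr.2 hrxy) Set.self_mem_Iic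
  · exact Set.disjoint_left.1 hxy Set.self_mem_Iic (hr.2 (r.symm hrxy))

lemma splitClasses_mem (hxy : Disjoint (Set.Iic x) (Set.Iic y)) {r : Setoid α}
    (hr : r ∈ {r ∈ noncrossingOn (Set.Iic x ∪ Set.Iic y) | r x y}) :
    splitClasses r {p | r x p ∧ p ≤ x} ∈
      noncrossingWithTop (Set.Iic x ∪ Set.Iic y) x ∩
        noncrossingWithTop (Set.Iic x ∪ Set.Iic y) y := by
  obtain ⟨⟨hr, hsupp⟩, hrxy⟩ := hr
  have hmem : splitClasses r {p | r x p ∧ p ≤ x} ∈ noncrossingOn (Set.Iic x ∪ Set.Iic y) :=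
    ⟨hr.splitClasses fun p q hpq hqp hp => ⟨r.trans hp.1 hpq, hqp.trans hp.2⟩,
      hsupp.anti splitClasses_le⟩
  refine ⟨⟨hmem, fun q hq => ?_⟩, ⟨hmem, fun q hq => ?_⟩⟩
  · exact ((splitClasses_apply.1 hq).2.1 ⟨r.refl x, le_rfl⟩).2
  · obtain ⟨hq, hiff⟩ := splitClasses_apply.1 hq
    refine (hsupp.mem_of_rel hq (Or.inr le_rfl)).resolve_left fun hqx => ?_
    exact Set.disjoint_left.1 hxy (hiff.2 ⟨r.trans hrxy hq, hqx⟩).2 Set.self_mem_Iic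

lemma rel_of_rel_of_le (hxy : Disjoint (Set.Iic x) (Set.Iic y)) {r : Setoid α}
    (hr : r ∈ noncrossingWithTop (Set.Iic x ∪ Set.Iic y) x) {p q : α}
    (hp : r x p) (hpq : p ≤ q) (hq : q ∈ Set.Iic x ∪ Set.Iic y) : r x q := by
  have hqx : q ≤ x := hq.resolve_right fun hqy =>
    Set.disjoint_left.1 hxy (hr.2 hp) (hpq.trans hqy)
  exact r.symm (hr.1.1.rel_of_between (r.symm hp) hpq hqx)

lemma mergeClasses_mem (hxy : Disjoint (Set.Iic x) (Set.Iic y)) {r : Setoid α}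
    (hr : r ∈ noncrossingWithTop (Set.Iic x ∪ Set.Iic y) x ∩
      noncrossingWithTop (Set.Iic x ∪ Set.Iic y) y) :
    mergeClasses r {p | r x p ∨ r y p} ∈
      {r ∈ noncrossingOn (Set.Iic x ∪ Set.Iic y) | r x y} := by
  obtain ⟨hrx, hry⟩ := hr
  set s := Set.Iic x ∪ Set.Iic y with hs
  set M := {p | r x p ∨ r y p}
  have hMs : M ⊆ s := by
    rintro p (hp | hp)
    exacts [Or.inl (hrx.2 hp), Or.inr (hry.2 hp)]
  have hM_up : ∀ ⦃p q⦄, p ∈ M → p ≤ q → q ∈ s → q ∈ M := by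
    rintro p q (hp | hp) hpq hq
    · exact Or.inl (rel_of_rel_of_le hxy hrx hp hpq hq)
    · rw [hs, Set.union_comm] at hry hq
      exact Or.inr (rel_of_rel_of_le hxy.symm hry hp hpq hq)
  have hM_rel : ∀ ⦃p q⦄, mergeClasses r M p q → (p ∈ M ↔ q ∈ M) := by
    rintro p q (⟨hp, hq⟩ | ⟨hp, hq, -⟩) <;> simp [hp, hq]
  have hsupp : SupportedOn (mergeClasses r M) s := by
    rintro p q (⟨hp, -⟩ | ⟨-, -, h⟩) hps
    exacts [absurd (hMs hp) hps, hrx.1.2 h hps]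
  have hconn : s.OrdConnected := ((isLowerSet_Iic x).union (isLowerSet_Iic y)).ordConnected
  refine ⟨⟨.of_supportedOn hconn hsupp ?_, hsupp⟩, Or.inl ⟨Or.inl (r.refl x), Or.inr (r.refl y)⟩⟩
  intro p hps p' _ q _ q' hqs' hp hq hle hle'
  by_cases hpM : p ∈ M
  · exact Or.inl ⟨hpM, (hM_rel hq).2 (hM_up ((hM_rel hp).1 hpM) hle' hqs')⟩
  · have hqM : q ∉ M := fun hqM => hpM (hM_up hqM hle hps)
    have hp' : r p p' := (hp.resolve_left fun h => hpM h.1).2.2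
    have hq' : r q q' := (hq.resolve_left fun h => hqM h.1).2.2
    exact Or.inr ⟨hpM, hqM, hrx.1.1 hp' hq' hle hle'⟩

lemma splitClasses_mergeClasses (hxy : Disjoint (Set.Iic x) (Set.Iic y)) {r : Setoid α}
    (hr : r ∈ noncrossingWithTop (Set.Iic x ∪ Set.Iic y) x ∩
      noncrossingWithTop (Set.Iic x ∪ Set.Iic y) y) :
    let r' := mergeClasses r {p | r x p ∨ r y p}
    splitClasses r' {p | r' x p ∧ p ≤ x} = r := by
  set M := {p | r x p ∨ r y p}
  intro r'
  have hxM : x ∈ M := Or.inl (r.refl x)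
  have hcut : ∀ p, p ∈ {p | r' x p ∧ p ≤ x} ↔ r x p := fun p => by
    refine ⟨fun ⟨h, hpx⟩ => ?_, fun h => ⟨Or.inl ⟨hxM, Or.inl h⟩, hr.1.2 h⟩⟩
    exact (h.resolve_right fun h => h.1 hxM).2.resolve_right fun hyp =>
      Set.disjoint_left.1 hxy hpx (hr.2.2 hyp)
  ext p q
  rw [splitClasses_apply, hcut, hcut, mergeClasses_apply]
  constructor
  · rintro ⟨⟨hp, hq⟩ | ⟨-, -, hpq⟩, hiff⟩
    · by_cases hxp : r x p
      · exact r.trans (r.symm hxp) (hiff.1 hxp)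
      · exact r.trans (r.symm (hp.resolve_left hxp)) (hq.resolve_left (mt hiff.2 hxp))
    · exact hpq
  · intro hpq
    have hiff : ∀ t, r t p ↔ r t q := fun t =>
      ⟨fun h => r.trans h hpq, fun h => r.trans h (r.symm hpq)⟩
    have hM : p ∈ M ↔ q ∈ M := or_congr (hiff x) (hiff y)
    by_cases hp : p ∈ M
    · exact ⟨Or.inl ⟨hp, hM.1 hp⟩, hiff x⟩
    · exact ⟨Or.inr ⟨hp, mt hM.2 hp, hpq⟩, hiff x⟩

lemma mergeClasses_splitClasses (hyx : ¬ y ≤ x) {r : Setoid α} (hrxy : r x y) :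
    let r' := splitClasses r {p | r x p ∧ p ≤ x}
    mergeClasses r' {p | r' x p ∨ r' y p} = r := by
  intro r'
  have hM : {p | r' x p ∨ r' y p} = {p | r x p} := by
    ext p
    have hyp : r y p ↔ r x p := ⟨r.trans hrxy, r.trans (r.symm hrxy)⟩
    simp only [Set.mem_ofPred_eq, r', splitClasses_apply, hyp]
    by_cases hpx : p ≤ x <;> simp [hyx, hpx]
  ext p q
  rw [hM, mergeClasses_apply, splitClasses_apply]
  constructor
  · rintro (⟨hp, hq⟩ | ⟨-, -, hpq, -⟩)
    exacts [r.trans (r.symm hp) hq, hpq]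
  · intro hpq
    by_cases hp : r x p
    · exact Or.inl ⟨hp, r.trans hp hpq⟩
    · have hq : ¬ r x q := fun hq => hp (r.trans hq (r.symm hpq))
      exact Or.inr ⟨hp, hq, hpq, by simp [hp, hq]⟩

lemma bijOn_mergeClasses (hxy : Disjoint (Set.Iic x) (Set.Iic y)) :
    Set.BijOn (fun r => mergeClasses r {p | r x p ∨ r y p})
      (noncrossingWithTop (Set.Iic x ∪ Set.Iic y) x ∩ noncrossingWithTop (Set.Iic x ∪ Set.Iic y) y)
      {r ∈ noncrossingOn (Set.Iic x ∪ Set.Iic y) | r x y} :=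
  Set.InvOn.bijOn (f' := fun r => splitClasses r {p | r x p ∧ p ≤ x})
    ⟨fun _ hr => splitClasses_mergeClasses hxy hr, fun _ hr =>
      mergeClasses_splitClasses (fun hyx => Set.disjoint_left.1 hxy hyx Set.self_mem_Iic) hr.2⟩
    (fun _ => mergeClasses_mem hxy) (fun _ => splitClasses_mem hxy)

lemma ncard_noncrossingOn_Iic_union_Iic (hs : (Set.Iic x ∪ Set.Iic y).Finite)
    (hxy : Disjoint (Set.Iic x) (Set.Iic y)) :
    (noncrossingOn (Set.Iic x ∪ Set.Iic y)).ncard =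
      (noncrossingWithTop (Set.Iic x ∪ Set.Iic y) x).ncard +
        (noncrossingWithTop (Set.Iic x ∪ Set.Iic y) y).ncard := by
  have hx := finite_noncrossingWithTop hs x
  have hy := finite_noncrossingWithTop hs y
  rw [noncrossingOn_Iic_union_Iic, Set.ncard_union_eq (disjoint_noncrossingWithTop_joined hxy)
    (hx.union hy) ((finite_noncrossingOn hs).subset (Set.sep_subset _ _)),
    ← (bijOn_mergeClasses hxy).ncard_eq, Set.ncard_union_add_ncard_inter _ _ hx hy]

end TwoTops

end OrderNoncrossing

section RaySeries

/-- The site `⟨i, k⟩` is the `k`-th point, counting from the origin outwards, on the ray with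
label `i`. The order of the `Sigma` type only compares sites on the same ray. -/
abbrev RaySite (ι : Type*) := (_ : ι) × ℕ

variable {ι : Type*}

lemma raySite_le_iff {p q : RaySite ι} : p ≤ q ↔ p.1 = q.1 ∧ p.2 ≤ q.2 := by
  rw [Sigma.le_def]
  exact ⟨fun ⟨h, hle⟩ => ⟨h, by simpa using hle⟩, fun ⟨h, hle⟩ => ⟨h, by simpa using hle⟩⟩

lemma raySite_lt_iff {p q : RaySite ι} : p < q ↔ p.1 = q.1 ∧ p.2 < q.2 := by
  rw [lt_iff_le_not_ge, raySite_le_iff, raySite_le_iff]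
  grind

/-- The configuration consisting of the first `d i` sites on each ray `i`. -/
def rayRegion (d : ι →₀ ℕ) : Finset (RaySite ι) := d.support.sigma fun i => range (d i)

@[simp] lemma mem_rayRegion {d : ι →₀ ℕ} {p : RaySite ι} : p ∈ rayRegion d ↔ p.2 < d p.1 := by
  simp only [rayRegion, mem_sigma, Finsupp.mem_support_iff, mem_range]
  exact ⟨And.right, fun h => ⟨Nat.ne_zero_of_lt h, h⟩⟩

lemma isLowerSet_rayRegion (d : ι →₀ ℕ) : IsLowerSet (rayRegion d : Set (RaySite ι)) := by
  rintro ⟨i, k⟩ q hq hp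
  obtain ⟨rfl, hle⟩ := raySite_le_iff.1 hq
  simp only [mem_coe, mem_rayRegion] at hp ⊢
  exact hle.trans_lt hp

lemma coe_rayRegion_single_add (e : ι →₀ ℕ) (i : ι) :
    (rayRegion (Finsupp.single i 1 + e) : Set (RaySite ι)) = insert ⟨i, e i⟩ ↑(rayRegion e) := by
  classical
  ext ⟨j, k⟩
  obtain rfl | hj := eq_or_ne j i
  · simp
    omega
  · simp [hj]

/-- The number of order-noncrossing partitions of `rayRegion d` in which the outermost site on
the ray `i` is the greatest element of its block; it is `0` if the ray carries no site. -/
noncomputable def topCount (i : ι) (d : ι →₀ ℕ) : ℕ :=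
  if d i = 0 then 0 else (noncrossingWithTop (rayRegion d : Set (RaySite ι)) ⟨i, d i - 1⟩).ncard

/-- The generating function of the order-noncrossing partitions of the configurations
`rayRegion d`. -/
noncomputable def ncSeries (ι : Type*) : MvPowerSeries ι ℤ :=
  fun d => ((noncrossingOn (rayRegion d : Set (RaySite ι))).ncard : ℤ)

/-- The generating function of `topCount i`. -/
noncomputable def topSeries (i : ι) : MvPowerSeries ι ℤ := fun d => (topCount i d : ℤ)

lemma coeff_ncSeries (d : ι →₀ ℕ) : MvPowerSeries.coeff d (ncSeries ι) =
    ((noncrossingOn (rayRegion d : Set (RaySite ι))).ncard : ℤ) := rfl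

lemma coeff_topSeries (i : ι) (d : ι →₀ ℕ) :
    MvPowerSeries.coeff d (topSeries i) = (topCount i d : ℤ) := rfl

lemma topCount_of_eq_zero {i : ι} {d : ι →₀ ℕ} (h : d i = 0) : topCount i d = 0 := if_pos h

lemma topCount_of_eq_succ {i : ι} {d : ι →₀ ℕ} {k : ℕ} (h : d i = k + 1) :
    topCount i d = (noncrossingWithTop (rayRegion d : Set (RaySite ι)) ⟨i, k⟩).ncard := by
  rw [topCount, h, if_neg k.succ_ne_zero, Nat.add_sub_cancel]

lemma topCount_single_add (i : ι) (e : ι →₀ ℕ) :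
    topCount i (Finsupp.single i 1 + e) =
      (noncrossingOn (rayRegion e : Set (RaySite ι))).ncard + topCount i e := by
  have hnot : (⟨i, e i⟩ : RaySite ι) ∉ (rayRegion e : Set (RaySite ι)) := by simp
  have htop : topCount i (Finsupp.single i 1 + e) =
      (noncrossingWithTop (insert ⟨i, e i⟩ ↑(rayRegion e)) (⟨i, e i⟩ : RaySite ι)).ncard := by
    rw [topCount_of_eq_succ (k := e i) (by simp [add_comm]), coe_rayRegion_single_add]
  rw [htop]
  rcases h : e i with - | k
  · rw [h] at hnot
    rw [noncrossingWithTop_insert_of_forall_not_lt hnot, topCount_of_eq_zero h, add_zero]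
    exact fun q _ hq => Nat.not_lt_zero _ (raySite_lt_iff.1 hq).2
  · rw [h] at hnot
    rw [topCount_of_eq_succ h]
    exact ncard_noncrossingWithTop_insert (rayRegion e).finite_toSet (by simp [h]) hnot
      (raySite_lt_iff.2 ⟨rfl, k.lt_succ_self⟩) fun q hq =>
        raySite_le_iff.2 ((raySite_lt_iff.1 hq).imp_right Nat.le_of_lt_succ)

lemma topSeries_eq (i : ι) :
    topSeries i = MvPowerSeries.X i * (ncSeries ι + topSeries i) := by
  ext d
  by_cases hd : Finsupp.single i 1 ≤ d
  · obtain ⟨e, rfl⟩ := le_iff_exists_add.1 hd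
    rw [MvPowerSeries.X, MvPowerSeries.coeff_add_monomial_mul, one_mul, map_add, coeff_topSeries,
      coeff_topSeries, coeff_ncSeries, topCount_single_add, Nat.cast_add]
  · rw [MvPowerSeries.X, MvPowerSeries.coeff_monomial_mul, if_neg hd]
    have hdi : d i = 0 := by simpa [Finsupp.single_le_iff] using hd
    rw [coeff_topSeries, topCount_of_eq_zero hdi, Nat.cast_zero]

lemma ncard_noncrossingOn_rayRegion_zero :
    (noncrossingOn (rayRegion (0 : ι →₀ ℕ) : Set (RaySite ι))).ncard = 1 := by
  rw [show (rayRegion (0 : ι →₀ ℕ) : Set (RaySite ι)) = ∅ by ext; simp, noncrossingOn_empty,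
    Set.ncard_singleton]

lemma coe_rayRegion_eq_Iic {d : ι →₀ ℕ} {i : ι} {k : ℕ} (hi : d i = k + 1)
    (hd : ∀ j ≠ i, d j = 0) : (rayRegion d : Set (RaySite ι)) = Set.Iic ⟨i, k⟩ := by
  ext ⟨j, l⟩
  obtain rfl | hj := eq_or_ne j i
  · simp [hi, Order.lt_add_one_iff]
  · simp [raySite_le_iff, hj, hd]

lemma coe_rayRegion_eq_Iic_union_Iic {d : Fin 2 →₀ ℕ} {a b : ℕ} (h0 : d 0 = a + 1)
    (h1 : d 1 = b + 1) :
    (rayRegion d : Set (RaySite (Fin 2))) = Set.Iic ⟨0, a⟩ ∪ Set.Iic ⟨1, b⟩ := by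
  ext ⟨j, l⟩
  fin_cases j <;> simp [raySite_le_iff, h0, h1]

lemma disjoint_Iic_raySite {i j : ι} (hij : i ≠ j) (k l : ℕ) :
    Disjoint (Set.Iic (⟨i, k⟩ : RaySite ι)) (Set.Iic ⟨j, l⟩) :=
  Set.disjoint_left.2 fun _ hi hj =>
    hij ((raySite_le_iff.1 hi).1.symm.trans (raySite_le_iff.1 hj).1)

lemma ncard_noncrossingOn_rayRegion {d : Fin 2 →₀ ℕ} (hd : d ≠ 0) :
    (noncrossingOn (rayRegion d : Set (RaySite (Fin 2)))).ncard =
      topCount 0 d + topCount 1 d := by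
  have honly : ∀ i j : Fin 2, i ≠ j → ∀ k, d i = k + 1 → d j = 0 →
      (noncrossingOn (rayRegion d : Set (RaySite (Fin 2)))).ncard = topCount i d := by
    intro i j hij k hi hj
    rw [topCount_of_eq_succ hi, coe_rayRegion_eq_Iic hi fun l hl => ?_, noncrossingOn_Iic]
    rwa [show l = j by omega]
  rcases h0 : d 0 with - | a <;> rcases h1 : d 1 with - | b
  · exact absurd (by ext i; fin_cases i <;> simpa) hd
  · rw [honly 1 0 (by decide) b h1 h0, topCount_of_eq_zero h0, zero_add]
  · rw [honly 0 1 (by decide) a h0 h1, topCount_of_eq_zero h1, add_zero]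
  · have hregion := coe_rayRegion_eq_Iic_union_Iic h0 h1
    rw [topCount_of_eq_succ h0, topCount_of_eq_succ h1, hregion]
    exact ncard_noncrossingOn_Iic_union_Iic (hregion ▸ (rayRegion d).finite_toSet)
      (disjoint_Iic_raySite (by decide) a b)

lemma ncSeries_fin_two : ncSeries (Fin 2) = 1 + topSeries 0 + topSeries 1 := by
  ext d
  rw [map_add, map_add, coeff_ncSeries, coeff_topSeries, coeff_topSeries,
    MvPowerSeries.coeff_one]
  split_ifs with hd
  · simp [hd, ncard_noncrossingOn_rayRegion_zero, topCount_of_eq_zero]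
  · rw [ncard_noncrossingOn_rayRegion hd, zero_add, Nat.cast_add]

end RaySeries

section Geometry

/-- The point of a vector space encoded by a ray site, where the ray `i` points in the direction
`v i`. The shift by one keeps the origin, the common endpoint of all rays, out of the
configuration. -/
def rayPoint {ι V : Type*} [AddCommMonoid V] (v : ι → V) (p : RaySite ι) : V := (p.2 + 1) • v p.1

lemma exists_linearMap_apply_eq {𝕜 ι V : Type*} [Field 𝕜] [AddCommGroup V] [Module 𝕜 V]
    {v : ι → V} (hv : LinearIndependent 𝕜 v) (c : ι → 𝕜) :
    ∃ f : V →ₗ[𝕜] 𝕜, ∀ i, f (v i) = c i := by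
  obtain ⟨g, hg⟩ := (Finsupp.linearCombination 𝕜 v).exists_leftInverse_of_injective
    (LinearMap.ker_eq_bot.2 hv)
  refine ⟨Finsupp.linearCombination 𝕜 c ∘ₗ g, fun i => ?_⟩
  have hgi : g (v i) = Finsupp.single i 1 := by simpa using LinearMap.congr_fun hg (.single i 1)
  simp [hgi]

variable {𝕜 ι V : Type*} [Field 𝕜] [LinearOrder 𝕜] [IsStrictOrderedRing 𝕜] [AddCommGroup V]
  [Module 𝕜 V]

lemma nonempty_segment_smul_inter_segment_smul (v w : V) {a b c d : 𝕜} (ha : 0 < a) (hab : a ≤ b)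
    (hc : 0 < c) (hcd : c ≤ d) :
    (segment 𝕜 (b • v) (c • w) ∩ segment 𝕜 (a • v) (d • w)).Nonempty := by
  obtain rfl | hab := hab.eq_or_lt
  · exact ⟨a • v, left_mem_segment 𝕜 _ _, left_mem_segment 𝕜 _ _⟩
  have hb := ha.trans hab
  have hd := hc.trans_le hcd
  have hD : 0 < b * d - a * c := sub_pos.2 (mul_lt_mul hab hcd hc hb.le)
  -- The weights are the solution of a linear system with determinant `b * d - a * c`.
  refine ⟨(a * b * (d - c) / (b * d - a * c)) • v + (c * d * (b - a) / (b * d - a * c)) • w,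
    ⟨a * (d - c) / (b * d - a * c), d * (b - a) / (b * d - a * c), ?_, ?_, ?_, ?_⟩,
    ⟨b * (d - c) / (b * d - a * c), c * (b - a) / (b * d - a * c), ?_, ?_, ?_, ?_⟩⟩
  any_goals exact div_nonneg (mul_nonneg (by positivity) (by linarith)) hD.le
  any_goals rw [← add_div, div_eq_one_iff_eq hD.ne']; ring
  all_goals rw [smul_smul, smul_smul]; congr 2 <;> ring

lemma nonempty_convexHull_rayPoint_inter (v : ι → V) {A B : Set (RaySite ι)}
    (hBA : ∃ p ∈ A, ∃ q ∈ B, q ≤ p) (hAB : ∃ p ∈ A, ∃ q ∈ B, p ≤ q) :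
    (convexHull 𝕜 (rayPoint v '' A) ∩ convexHull 𝕜 (rayPoint v '' B)).Nonempty := by
  obtain ⟨⟨i, b⟩, hp, ⟨j, a⟩, hq, hqp⟩ := hBA
  obtain ⟨⟨k, c⟩, hp', ⟨l, d⟩, hq', hpq'⟩ := hAB
  obtain ⟨rfl : j = i, hab : a ≤ b⟩ := raySite_le_iff.1 hqp
  obtain ⟨rfl : k = l, hcd : c ≤ d⟩ := raySite_le_iff.1 hpq'
  refine (nonempty_segment_smul_inter_segment_smul (v j) (v k) (a := (a + 1 : 𝕜)) (b := b + 1)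
    (c := c + 1) (d := d + 1) (by positivity) (by gcongr) (by positivity) (by gcongr)).mono ?_
  refine Set.inter_subset_inter (segment_subset_convexHull ⟨_, hp, ?_⟩ ⟨_, hp', ?_⟩)
    (segment_subset_convexHull ⟨_, hq, ?_⟩ ⟨_, hq', ?_⟩) <;>
  simp only [rayPoint, ← Nat.cast_smul_eq_nsmul 𝕜, Nat.cast_add, Nat.cast_one]

lemma exists_scale_between {S T : Set ℕ} (h : ∀ k ∈ S, ∀ l ∈ T, k < l) :
    ∃ c : 𝕜, (∀ k ∈ S, (k + 1) * c < 1) ∧ ∀ l ∈ T, 1 < (l + 1) * c := by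
  obtain rfl | hT := T.eq_empty_or_nonempty
  · exact ⟨0, by simp⟩
  have hpos : (0 : 𝕜) < 2 * (sInf T : ℕ) + 1 := by positivity
  -- `1 / c` is the midpoint of `sInf T` and `sInf T + 1`.
  refine ⟨2 / (2 * (sInf T : ℕ) + 1), fun k hk => ?_, fun l hl => ?_⟩
  · have hlt : (k : 𝕜) + 1 ≤ (sInf T : ℕ) := mod_cast h k hk _ (Nat.sInf_mem hT)
    rw [mul_div_assoc', div_lt_one hpos]
    linarith
  · have hle : ((sInf T : ℕ) : 𝕜) ≤ l := mod_cast Nat.sInf_le hl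
    rw [mul_div_assoc', one_lt_div hpos]
    linarith

lemma exists_linearMap_of_forall_not_le {v : ι → V} (hv : LinearIndependent 𝕜 v)
    {A B : Set (RaySite ι)} (h : ∀ p ∈ A, ∀ q ∈ B, ¬ q ≤ p) :
    ∃ f : V →ₗ[𝕜] 𝕜, (∀ p ∈ A, f (rayPoint v p) < 1) ∧ ∀ q ∈ B, 1 < f (rayPoint v q) := by
  have hlt : ∀ i, ∀ k ∈ {k | ⟨i, k⟩ ∈ A}, ∀ l ∈ {l | ⟨i, l⟩ ∈ B}, k < l := fun i k hk l hl =>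
    not_le.1 fun hle => h _ hk _ hl (raySite_le_iff.2 ⟨rfl, hle⟩)
  choose c hcA hcB using fun i => exists_scale_between (𝕜 := 𝕜) (hlt i)
  obtain ⟨f, hf⟩ := exists_linearMap_apply_eq hv c
  have hfp : ∀ p : RaySite ι, f (rayPoint v p) = (p.2 + 1) * c p.1 := fun p => by
    simp [rayPoint, hf]
  exact ⟨f, fun p hp => hfp p ▸ hcA p.1 p.2 hp, fun q hq => hfp q ▸ hcB q.1 q.2 hq⟩

lemma disjoint_convexHull_of_forall_not_le {v : ι → V} (hv : LinearIndependent 𝕜 v)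
    {A B : Set (RaySite ι)} (h : ∀ p ∈ A, ∀ q ∈ B, ¬ q ≤ p) :
    Disjoint (convexHull 𝕜 (rayPoint v '' A)) (convexHull 𝕜 (rayPoint v '' B)) := by
  obtain ⟨f, hA, hB⟩ := exists_linearMap_of_forall_not_le hv h
  have hA' : convexHull 𝕜 (rayPoint v '' A) ⊆ {z | f z < 1} :=
    convexHull_min (Set.forall_mem_image.2 hA) (convex_halfSpace_lt f.isLinear 1)
  have hB' : convexHull 𝕜 (rayPoint v '' B) ⊆ {z | 1 < f z} :=
    convexHull_min (Set.forall_mem_image.2 hB) (convex_halfSpace_gt f.isLinear 1)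
  exact Set.disjoint_left.2 fun z hzA hzB => lt_asymm (hA' hzA) (hB' hzB)

lemma rayPoint_injective {v : ι → V} (hv : LinearIndependent 𝕜 v) :
    Function.Injective (rayPoint v) := by
  have key : ∀ ⦃p q : RaySite ι⦄, rayPoint v p = rayPoint v q → q ≤ p := by
    intro p q hpq
    by_contra hle
    obtain ⟨f, hp, hq⟩ := exists_linearMap_of_forall_not_le hv (A := {p}) (B := {q}) (by simpa)
    exact lt_asymm (hp p rfl) (hpq ▸ hq q rfl)
  exact fun p q hpq => le_antisymm (key hpq.symm) (key hpq)

lemma disjoint_convexHull_iff_of_subset_range {v : ι → V} (hv : LinearIndependent 𝕜 v)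
    {S T : Set V} (hS : S ⊆ Set.range (rayPoint v)) (hT : T ⊆ Set.range (rayPoint v)) :
    Disjoint (convexHull 𝕜 S) (convexHull 𝕜 T) ↔
      ¬ ((∃ p, rayPoint v p ∈ S ∧ ∃ q, rayPoint v q ∈ T ∧ q ≤ p) ∧
        ∃ p, rayPoint v p ∈ S ∧ ∃ q, rayPoint v q ∈ T ∧ p ≤ q) := by
  rw [← Set.image_preimage_eq_of_subset hS, ← Set.image_preimage_eq_of_subset hT]
  simp only [(rayPoint_injective hv).mem_set_image]
  refine ⟨fun h ⟨hBA, hAB⟩ => ?_, fun h => ?_⟩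
  · exact Set.not_disjoint_iff_nonempty_inter.2 (nonempty_convexHull_rayPoint_inter v hBA hAB) h
  · rcases not_and_or.1 h with h | h <;> push Not at h
    · exact disjoint_convexHull_of_forall_not_le hv h
    · exact (disjoint_convexHull_of_forall_not_le hv fun q hq p hp => h p hp q hq).symm

/-- The embedding of the ray sites into the vector space, for linearly independent directions. -/
def rayEmbedding {v : ι → V} (hv : LinearIndependent 𝕜 v) : RaySite ι ↪ V :=
  ⟨rayPoint v, rayPoint_injective hv⟩

end Geometry

section Blocks

variable {α β : Type*} [DecidableEq β] {t : Finset β}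

/-- The setoid whose classes are the blocks of a partition of `t` and the singletons outside
`t`. -/
def blockSetoid (π : Finpartition t) : Setoid β where
  r a b := a = b ∨ ∃ B ∈ π.parts, a ∈ B ∧ b ∈ B
  iseqv :=
    { refl := fun _ => Or.inl rfl
      symm := by
        rintro a b (rfl | ⟨B, hB, ha, hb⟩)
        exacts [Or.inl rfl, Or.inr ⟨B, hB, hb, ha⟩]
      trans := by
        rintro a b c (rfl | ⟨B, hB, ha, hb⟩) (rfl | ⟨C, hC, hb', hc⟩)
        · exact Or.inl rfl
        · exact Or.inr ⟨C, hC, hb', hc⟩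
        · exact Or.inr ⟨B, hB, ha, hb⟩
        · exact Or.inr ⟨B, hB, ha, π.eq_of_mem_parts hC hB hb' hb ▸ hc⟩ }

lemma blockSetoid_apply {π : Finpartition t} {a b : β} :
    blockSetoid π a b ↔ a = b ∨ ∃ B ∈ π.parts, a ∈ B ∧ b ∈ B := Iff.rfl

lemma blockSetoid_iff_of_mem {π : Finpartition t} {B : Finset β} (hB : B ∈ π.parts) {a b : β}
    (ha : a ∈ B) : blockSetoid π a b ↔ b ∈ B := by
  refine ⟨?_, fun hb => Or.inr ⟨B, hB, ha, hb⟩⟩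
  rintro (rfl | ⟨C, hC, ha', hb⟩)
  exacts [ha, π.eq_of_mem_parts hC hB ha' ha ▸ hb]

lemma supportedOn_blockSetoid (π : Finpartition t) : SupportedOn (blockSetoid π) t := by
  rintro a b (rfl | ⟨B, hB, ha, -⟩) hat
  exacts [rfl, absurd (π.le hB ha) hat]

lemma blockSetoid_injective : Function.Injective (blockSetoid (t := t)) := by
  have key : ∀ π π' : Finpartition t, blockSetoid π = blockSetoid π' → π.parts ⊆ π'.parts := by
    intro π π' h B hB
    obtain ⟨a, ha⟩ := π.nonempty_of_mem_parts hB
    obtain ⟨C, hC, haC⟩ := π'.exists_mem (π.le hB ha)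
    rwa [show B = C from ext fun b => by
      rw [← blockSetoid_iff_of_mem hB ha, h, blockSetoid_iff_of_mem hC haC]]
  exact fun π π' h => Finpartition.ext ((key π π' h).antisymm (key π' π h.symm))

lemma blockSetoid_ofSetSetoid {r : Setoid β} [DecidableRel r.r] {a b : β} :
    blockSetoid (Finpartition.ofSetSetoid r t) a b ↔ a = b ∨ a ∈ t ∧ b ∈ t ∧ r a b := by
  rw [← Finpartition.mem_part_ofSetSetoid_iff_rel, Finpartition.mem_part_iff_exists,
    blockSetoid_apply]
  simp only [and_comm]

lemma bijOn_comap_blockSetoid (f : α ↪ β) (s : Finset α) :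
    Set.BijOn (fun π : Finpartition (s.map f) => (blockSetoid π).comap f) Set.univ
      {r | SupportedOn r s} := by
  have hmem : ∀ p, f p ∈ s.map f ↔ p ∈ s := fun p => mem_map' f
  refine ⟨fun π _ p q hpq hp => f.injective (supportedOn_blockSetoid π hpq (by simpa using hp)),
    fun π _ π' _ h => blockSetoid_injective ?_, fun r hr => ?_⟩
  · refine (supportedOn_blockSetoid π).ext (supportedOn_blockSetoid π') fun a ha b hb => ?_
    obtain ⟨p, -, rfl⟩ := mem_map.1 ha
    obtain ⟨q, -, rfl⟩ := mem_map.1 hb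
    exact Setoid.ext_iff.1 h p q
  · classical
    obtain ⟨r, rfl⟩ := Setoid.comap_surjective f f.injective r
    refine ⟨Finpartition.ofSetSetoid r (s.map f), Set.mem_univ _, ?_⟩
    ext p q
    beta_reduce
    rw [Setoid.comap_rel, Setoid.comap_rel, blockSetoid_ofSetSetoid, hmem, hmem]
    constructor
    · rintro (hpq | ⟨-, -, hpq⟩)
      exacts [f.injective hpq ▸ r.refl _, hpq]
    · intro hpq
      by_cases hp : p ∈ s
      · exact Or.inr ⟨hp, hr.mem_of_rel hpq hp, hpq⟩
      · exact Or.inl (congrArg f (hr hpq hp))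

end Blocks

section NoncrossingBlocks

variable {𝕜 ι V : Type*} [Field 𝕜] [LinearOrder 𝕜] [IsStrictOrderedRing 𝕜] [AddCommGroup V]
  [Module 𝕜 V] [DecidableEq V]

lemma pairwise_disjoint_convexHull_iff {v : ι → V} (hv : LinearIndependent 𝕜 v)
    {s : Finset (RaySite ι)} (hs : (s : Set (RaySite ι)).OrdConnected)
    (π : Finpartition (s.map (rayEmbedding hv))) :
    ((π.parts : Set (Finset V)).Pairwise fun B C =>
        Disjoint (convexHull 𝕜 (B : Set V)) (convexHull 𝕜 (C : Set V))) ↔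
      OrderNoncrossing ((blockSetoid π).comap (rayEmbedding hv)) := by
  have hrange : ∀ B ∈ π.parts, (B : Set V) ⊆ Set.range (rayPoint v) := fun B hB b hb =>
    (mem_map.1 (π.le hB hb)).imp fun _ h => h.2
  constructor
  · refine fun h => .of_supportedOn hs ((bijOn_comap_blockSetoid _ s).mapsTo (Set.mem_univ π)) ?_
    intro p hp p' _ q hq q' _ hpp' hqq' hle hle'
    obtain ⟨B, hB, hpB⟩ := π.exists_mem ((mem_map' (rayEmbedding hv)).2 hp)
    obtain ⟨C, hC, hqC⟩ := π.exists_mem ((mem_map' (rayEmbedding hv)).2 hq)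
    obtain rfl | hne := eq_or_ne B C
    · exact Or.inr ⟨B, hB, hpB, hqC⟩
    · rw [Setoid.comap_rel, blockSetoid_iff_of_mem hB hpB] at hpp'
      rw [Setoid.comap_rel, blockSetoid_iff_of_mem hC hqC] at hqq'
      exact absurd ⟨⟨p, hpB, q, hqC, hle⟩, p', hpp', q', hqq', hle'⟩
        ((disjoint_convexHull_iff_of_subset_range hv (hrange B hB) (hrange C hC)).1 (h hB hC hne))
  · intro h B hB C hC hne
    rw [disjoint_convexHull_iff_of_subset_range hv (hrange B hB) (hrange C hC)]
    rintro ⟨⟨p, hpB, q, hqC, hle⟩, p', hpB', q', hqC', hle'⟩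
    have hpq : blockSetoid π (rayPoint v p) (rayPoint v q) :=
      h (Or.inr ⟨B, hB, hpB, hpB'⟩) (Or.inr ⟨C, hC, hqC, hqC'⟩) hle hle'
    exact hne (π.eq_of_mem_parts hB hC ((blockSetoid_iff_of_mem hB hpB).1 hpq) hqC)

end NoncrossingBlocks

lemma card_NC_map_eq_ncard {ι : Type*} {v : ι → ℂ} (hv : LinearIndependent ℝ v)
    {s : Finset (RaySite ι)} (hs : (s : Set (RaySite ι)).OrdConnected) :
    Nat.card (NC (s.map (rayEmbedding hv))) = (noncrossingOn (s : Set (RaySite ι))).ncard := by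
  set e := rayEmbedding hv
  have hbij := bijOn_comap_blockSetoid e s
  have hiff : ∀ π : Finpartition (s.map e),
      IsNoncrossing π ↔ OrderNoncrossing ((blockSetoid π).comap e) :=
    pairwise_disjoint_convexHull_iff hv hs
  have himage : (fun π : Finpartition (s.map e) => (blockSetoid π).comap e) ''
      {π | IsNoncrossing π} = noncrossingOn s := by
    refine Set.Subset.antisymm ?_ fun r hr => ?_
    · rintro _ ⟨π, hπ, rfl⟩
      exact ⟨(hiff π).1 hπ, hbij.mapsTo (Set.mem_univ π)⟩
    · obtain ⟨π, -, rfl⟩ := hbij.surjOn hr.2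
      exact ⟨π, (hiff π).2 hr.1, rfl⟩
  rw [← himage, (hbij.injOn.mono (Set.subset_univ _)).ncard_image]
  exact Nat.card_coe_set_eq _

lemma exists_mem_Icc_one_iff {α : Type*} (g : ℕ → α) (n : ℕ) (z : α) :
    (∃ j ∈ Icc 1 n, g j = z) ↔ ∃ k < n, g (k + 1) = z := by
  constructor
  · rintro ⟨j, hj, rfl⟩
    obtain ⟨h1, hn⟩ := mem_Icc.1 hj
    exact ⟨j - 1, by omega, by rw [Nat.sub_add_cancel h1]⟩
  · rintro ⟨k, hk, rfl⟩
    exact ⟨k + 1, mem_Icc.2 ⟨by omega, hk⟩, rfl⟩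

lemma Uconfig_eq_map_rayRegion (d : Fin 2 →₀ ℕ) :
    Uconfig (d 0) (d 1) =
      (rayRegion d).map (rayEmbedding Complex.basisOneI.linearIndependent) := by
  have hreal : ∀ k, rayPoint Complex.basisOneI ⟨0, k⟩ = ((k + 1 : ℕ) : ℂ) := fun k => by
    simp [rayPoint, Complex.coe_basisOneI]
  have himag : ∀ k, rayPoint Complex.basisOneI ⟨1, k⟩ = ((k + 1 : ℕ) : ℂ) * Complex.I :=
    fun k => by simp [rayPoint, Complex.coe_basisOneI]
  ext z
  simp only [Uconfig, mem_union, mem_image, exists_mem_Icc_one_iff, mem_map, mem_rayRegion,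
    rayEmbedding, Function.Embedding.coeFn_mk, Sigma.exists, Fin.exists_fin_two, hreal, himag]

lemma Useries_eq_ncSeries_sub_one : Useries = ncSeries (Fin 2) - 1 := by
  ext d
  have hd : (d 0 = 0 ∧ d 1 = 0) ↔ d = 0 := by simp [Finsupp.ext_iff, Fin.forall_fin_two]
  rw [map_sub, coeff_ncSeries, MvPowerSeries.coeff_one]
  change useq (d 0) (d 1) = _
  simp only [useq, hd]
  split_ifs with h
  · rw [h, ncard_noncrossingOn_rayRegion_zero, Nat.cast_one, sub_self]
  · rw [Uconfig_eq_map_rayRegion, card_NC_map_eq_ncard _ (isLowerSet_rayRegion d).ordConnected,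
      sub_zero]

/-- `(1 - 2X - 2Y + 3XY) ⬝ U(X,Y) = X + Y - 2XY` in `ℤ⟦X,Y⟧`. -/
theorem nc_U_generating_function :
    (1 - 2 * MvPowerSeries.X 0 - 2 * MvPowerSeries.X 1 +
        3 * (MvPowerSeries.X 0 * MvPowerSeries.X 1)) * Useries =
      MvPowerSeries.X 0 + MvPowerSeries.X 1 -
        2 * (MvPowerSeries.X 0 * MvPowerSeries.X 1) := by
  have h0 := topSeries_eq (0 : Fin 2)
  have h1 := topSeries_eq (1 : Fin 2)
  have hU : ncSeries (Fin 2) = 1 + topSeries 0 + topSeries 1 := ncSeries_fin_two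
  set X : MvPowerSeries (Fin 2) ℤ := MvPowerSeries.X 0
  set Y : MvPowerSeries (Fin 2) ℤ := MvPowerSeries.X 1
  rw [Useries_eq_ncSeries_sub_one]
  linear_combination (1 - X) * (1 - Y) * hU + (1 - Y) * h0 + (1 - X) * h1
end

section
/- Let u_{m,n} = |NC(U_{m,n})| and v_{m,n} = |NC(V_{m,n})|. For all m ≥ 1 and n ≥ 1, v_{m,n} = u_{m,n} + v_{m−1,n} + v_{m,n−1} − v_{m−1,n−1}. -/
open Finset

/-- The closed cone configuration `V_{m,n} = U_{m,n} ∪ {0}`. -/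
noncomputable def Vconfig (m n : ℕ) : Finset ℂ := insert 0 (Uconfig m n)

/-! Order the cone by `z ≤ w` if `z ∈ [0, w]`. The convex hulls of two blocks `A` and `C` meet
exactly when some point of `C` lies below a point of `A` and some point of `A` lies below a point
of `C`, so noncrossing partitions depend only on this order: a disjoint union of two chains for `U`,
and the same with a bottom element `0` added for `V`. If `0` is a singleton block of a noncrossing
partition of `V`, deleting it leaves a noncrossing partition of `U`. If not, `0` is joined to every
point of `[0, z]` for some `z ≠ 0`, hence to `1` or to `i`. Merging `0` with `1`, with `i` or with
both contracts `V` to the smaller configurations, and inclusion-exclusion gives the recursion. -/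

open Function

section Order

/-- Noncrossing partitions of an ordered set, encoded as equivalence relations: two blocks cross
when each of them has an element lying below an element of the other one. On a cone configuration
ordered by `z ≤ w ↔ z ∈ [0, w]` these are the noncrossing partitions in the plane. -/
def orderNC (X : Type*) [LE X] : Set (Setoid X) :=
  {r | ∀ ⦃a a' c c' : X⦄, r a a' → r c c' → c ≤ a → a' ≤ c' → r a c}

variable {X Y : Type*}

lemma comap_mem_orderNC [Preorder X] [Preorder Y] {f : X → Y} (hf : Monotone f) {r : Setoid Y}
    (hr : r ∈ orderNC Y) : r.comap f ∈ orderNC X :=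
  fun _ _ _ _ ha hc hca hac => hr ha hc (hf hca) (hf hac)

lemma ncard_orderNC_retract [Preorder X] [Preorder Y] {s : X → Y} {i : Y → X} (hs : Monotone s)
    (hi : Monotone i) (hsi : LeftInverse s i) :
    {r ∈ orderNC X | ∀ x, r x (i (s x))}.ncard = (orderNC Y).ncard := by
  rw [← Set.ncard_image_of_injective (orderNC Y) (Setoid.comap_injective s hsi.surjective)]
  refine congrArg Set.ncard (Set.ext fun r => ?_)
  constructor
  · rintro ⟨hr, hrs⟩
    refine ⟨r.comap i, comap_mem_orderNC hi hr, Setoid.ext fun x y => ⟨fun h => ?_, fun h => ?_⟩⟩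
    · exact r.trans' (hrs x) (r.trans' h (r.symm' (hrs y)))
    · exact r.trans' (r.symm' (hrs x)) (r.trans' h (hrs y))
  · rintro ⟨r, hr, rfl⟩
    refine ⟨comap_mem_orderNC hs hr, fun x => ?_⟩
    rw [Setoid.comap_rel, hsi]

/-- The map collapsing the complement of the image of `e` to the bottom element. -/
noncomputable def collapse (e : Y → X) : WithBot X → WithBot Y :=
  WithBot.recBotCoe ⊥ (extend e (↑) fun _ => ⊥)

lemma collapse_coe_apply {e : Y → X} (he : Injective e) (y : Y) : collapse e (e y) = y :=
  he.extend_apply WithBot.some (fun _ => ⊥) y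

lemma collapse_coe_of_notMem {e : Y → X} {x : X} (hx : x ∉ Set.range e) : collapse e x = ⊥ :=
  extend_apply' WithBot.some (fun _ => ⊥) x hx

lemma monotone_collapse [Preorder X] [Preorder Y] (e : Y ↪o X)
    (he : IsUpperSet (Set.range e)) : Monotone (collapse e) := by
  intro x x' hxx'
  induction x with
  | bot => exact bot_le
  | coe x =>
    by_cases hx : x ∈ Set.range e
    · induction x' with
      | bot => simp at hxx'
      | coe x' =>
        obtain ⟨y', rfl⟩ := he (WithBot.coe_le_coe.1 hxx') hx
        obtain ⟨y, rfl⟩ := hx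
        simpa [collapse_coe_apply e.injective] using hxx'
    · simp [collapse_coe_of_notMem hx]

theorem ncard_orderNC_contract [Preorder X] [Preorder Y] (e : Y ↪o X)
    (he : IsUpperSet (Set.range e)) :
    {r ∈ orderNC (WithBot X) | ∀ x ∉ Set.range e, r ⊥ (x : WithBot X)}.ncard =
      (orderNC (WithBot Y)).ncard := by
  rw [← ncard_orderNC_retract (monotone_collapse e he) e.monotone.withBot_map]
  · congr 1
    ext r
    refine and_congr_right fun _ => ⟨fun h x => ?_, fun h x hx => ?_⟩
    · induction x with
      | bot => exact r.refl' _
      | coe x =>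
        by_cases hx : x ∈ Set.range e
        · obtain ⟨y, rfl⟩ := hx
          rw [collapse_coe_apply e.injective]
          exact r.refl' _
        · rw [collapse_coe_of_notMem hx]
          exact r.symm' (h x hx)
    · simpa [collapse_coe_of_notMem hx] using r.symm' (h x)
  · intro y
    induction y with
    | bot => rfl
    | coe y => exact collapse_coe_apply e.injective y

/-- The extension of an equivalence relation on `X` to `WithBot X` in which `⊥` is a singleton
class. -/
def isolateBot (r : Setoid X) : Setoid (WithBot X) :=
  Setoid.ker (WithBot.map (Quotient.mk r))

lemma isolateBot_coe_coe {r : Setoid X} {x y : X} :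
    isolateBot r (x : WithBot X) (y : WithBot X) ↔ r x y :=
  Setoid.ker_def.trans (by simp [Quotient.eq])

lemma not_isolateBot_bot_coe (r : Setoid X) (x : X) : ¬ isolateBot r ⊥ (x : WithBot X) :=
  Setoid.ker_def.not.2 (by simp)

lemma isolateBot_comap_coe {r : Setoid (WithBot X)} (hr : ∀ x : X, ¬ r ⊥ (x : WithBot X)) :
    isolateBot (r.comap (↑)) = r := by
  ext x y
  induction x with
  | bot =>
    induction y with
    | bot => exact iff_of_true (Setoid.refl' _ _) (r.refl' _)
    | coe y => exact iff_of_false (not_isolateBot_bot_coe _ y) (hr y)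
  | coe x =>
    induction y with
    | bot =>
      exact iff_of_false (fun h => not_isolateBot_bot_coe _ x (Setoid.symm' _ h))
        fun h => hr x (r.symm' h)
    | coe y => exact isolateBot_coe_coe

lemma isolateBot_injective : Injective (isolateBot (X := X)) := fun r r' h =>
  Setoid.ext fun _ _ => by rw [← isolateBot_coe_coe, h, isolateBot_coe_coe]

lemma isolateBot_mem_orderNC [Preorder X] {r : Setoid X} (hr : r ∈ orderNC X) :
    isolateBot r ∈ orderNC (WithBot X) := by
  intro a a' c c' haa hcc hca hac
  induction a with
  | bot =>
    rw [WithBot.le_bot_iff.1 hca]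
  | coe a =>
    obtain ⟨a', rfl⟩ : ∃ x : X, ↑x = a' := WithBot.ne_bot_iff_exists.1 <| by
      rintro rfl
      exact not_isolateBot_bot_coe r a (Setoid.symm' _ haa)
    obtain ⟨c', rfl, -⟩ := WithBot.coe_le_iff.1 hac
    obtain ⟨c, rfl⟩ : ∃ x : X, ↑x = c := WithBot.ne_bot_iff_exists.1 <| by
      rintro rfl
      exact not_isolateBot_bot_coe r c' hcc
    rw [isolateBot_coe_coe] at haa hcc ⊢
    exact hr haa hcc (WithBot.coe_le_coe.1 hca) (WithBot.coe_le_coe.1 hac)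

theorem ncard_orderNC_isolated_bot [Preorder X] :
    {r ∈ orderNC (WithBot X) | ∀ x : X, ¬ r ⊥ (x : WithBot X)}.ncard = (orderNC X).ncard := by
  rw [← Set.ncard_image_of_injective (orderNC X) isolateBot_injective]
  refine congrArg Set.ncard (Set.ext fun r => ?_)
  constructor
  · rintro ⟨hr, hbot⟩
    exact ⟨r.comap (↑), comap_mem_orderNC WithBot.coe_mono hr, isolateBot_comap_coe hbot⟩
  · rintro ⟨r, hr, rfl⟩
    exact ⟨isolateBot_mem_orderNC hr, not_isolateBot_bot_coe r⟩

lemma rel_bot_of_le [Preorder X] [OrderBot X] {r : Setoid X} (hr : r ∈ orderNC X) {x y : X}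
    (hy : r ⊥ y) (hxy : x ≤ y) : r ⊥ x :=
  r.trans' hy (hr (r.symm' hy) (r.refl' x) hxy bot_le)

lemma finite_setoid (X : Type*) [Finite X] : Finite (Setoid X) :=
  .of_injective _ fun _ _ => Setoid.eq_iff_rel_eq.2

theorem ncard_orderNC_withBot [Preorder X] [Finite X] {a b : X} (hab : ∀ x, a ≤ x ∨ b ≤ x) :
    (orderNC (WithBot X)).ncard +
        {r ∈ orderNC (WithBot X) | r ⊥ (a : WithBot X) ∧ r ⊥ (b : WithBot X)}.ncard =
      (orderNC X).ncard + {r ∈ orderNC (WithBot X) | r ⊥ (a : WithBot X)}.ncard +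
        {r ∈ orderNC (WithBot X) | r ⊥ (b : WithBot X)}.ncard := by
  have := finite_setoid (WithBot X)
  set A := {r ∈ orderNC (WithBot X) | r ⊥ (a : WithBot X)}
  set B := {r ∈ orderNC (WithBot X) | r ⊥ (b : WithBot X)}
  set I := {r ∈ orderNC (WithBot X) | ∀ x : X, ¬ r ⊥ (x : WithBot X)}
  have inter_eq : {r ∈ orderNC (WithBot X) | r ⊥ (a : WithBot X) ∧ r ⊥ (b : WithBot X)} = A ∩ B :=
    Set.sep_and
  have disj : Disjoint I (A ∪ B) := Set.disjoint_left.2 fun r hI hAB =>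
    hAB.elim (fun hA => hI.2 a hA.2) fun hB => hI.2 b hB.2
  have union_eq : orderNC (WithBot X) = I ∪ (A ∪ B) := by
    refine Set.Subset.antisymm (fun r hr => ?_) ?_
    · by_cases hI : r ∈ I
      · exact Or.inl hI
      obtain ⟨x, hx⟩ : ∃ x : X, r ⊥ (x : WithBot X) := by
        by_contra! h
        exact hI ⟨hr, h⟩
      exact Or.inr ((hab x).imp (fun h => ⟨hr, rel_bot_of_le hr hx (WithBot.coe_le_coe.2 h)⟩)
        fun h => ⟨hr, rel_bot_of_le hr hx (WithBot.coe_le_coe.2 h)⟩)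
    · simp [I, A, B, Set.sep_subset]
  have card_union := Set.ncard_union_add_ncard_inter A B
  have card_isolated : I.ncard = (orderNC X).ncard := ncard_orderNC_isolated_bot
  rw [inter_eq, union_eq, Set.ncard_union_eq disj]
  omega

end Order

section Finpartition

variable {α ι : Type*} [DecidableEq α] [Fintype ι] {f : ι → α}

/-- The equivalence relation on the index set of a family `f` induced by a partition of its range;
it lets one work on `ι` instead of on the points themselves. -/
def partSetoid (π : Finpartition (univ.image f)) : Setoid ι :=
  Setoid.ker fun x => π.part (f x)

lemma partSetoid_apply {π : Finpartition (univ.image f)} {x y : ι} :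
    partSetoid π x y ↔ π.part (f x) = π.part (f y) := Iff.rfl

lemma coe_part_eq_image (π : Finpartition (univ.image f)) (x : ι) :
    (π.part (f x) : Set α) = f '' {y | partSetoid π x y} := by
  have mem_iff (y : ι) : f y ∈ π.part (f x) ↔ partSetoid π x y := by
    rw [π.mem_part_iff_part_eq_part (mem_image_of_mem f (mem_univ y))
      (mem_image_of_mem f (mem_univ x)), partSetoid_apply, eq_comm]
  ext z
  constructor
  · intro hz
    obtain ⟨y, -, rfl⟩ := mem_image.1 (π.part_subset _ hz)
    exact ⟨y, (mem_iff y).1 hz, rfl⟩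
  · rintro ⟨y, hy, rfl⟩
    exact (mem_iff y).2 hy

lemma mem_parts_iff_exists_part {π : Finpartition (univ.image f)} {B : Finset α} :
    B ∈ π.parts ↔ ∃ x, π.part (f x) = B := by
  constructor
  · intro hB
    obtain ⟨z, hz, rfl⟩ := π.part_surjOn hB
    obtain ⟨x, -, rfl⟩ := mem_image.1 hz
    exact ⟨x, rfl⟩
  · rintro ⟨x, rfl⟩
    exact π.part_mem.2 (mem_image_of_mem f (mem_univ x))

lemma partSetoid_injective : Injective (partSetoid (f := f)) := by
  intro π ρ h
  have part_eq (x : ι) : π.part (f x) = ρ.part (f x) := by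
    rw [← coe_inj, coe_part_eq_image, coe_part_eq_image, h]
  ext B
  simp only [mem_parts_iff_exists_part, part_eq]

lemma partSetoid_surjective (hf : Injective f) : Surjective (partSetoid (f := f)) := by
  classical
  intro r
  let s : Setoid α := Setoid.ker (extend f (fun x => some (Quotient.mk r x)) fun _ => none)
  have s_apply (x y : ι) : s (f x) (f y) ↔ r x y := by
    simp [s, Setoid.ker_def, hf.extend_apply, Quotient.eq]
  refine ⟨Finpartition.ofSetSetoid s (univ.image f), Setoid.ext fun x y => ?_⟩
  rw [partSetoid_apply, ← Finpartition.mem_part_iff_part_eq_part,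
    Finpartition.mem_part_ofSetSetoid_iff_rel, s_apply, r.comm']
  all_goals simp

end Finpartition

section Geometry

variable {𝕜 E : Type*} [Field 𝕜] [LinearOrder 𝕜] [IsStrictOrderedRing 𝕜] [AddCommGroup E]
  [Module 𝕜 E]

lemma mem_segment_zero_iff_exists_smul {x y : E} :
    x ∈ segment 𝕜 0 y ↔ ∃ t ∈ Set.Icc (0 : 𝕜) 1, t • y = x := by
  simp [segment_eq_image']

-- With `c = s • a` and `a' = t • c'`, the segments meet at the parameters `(1 - s) / (1 - t * s)`
-- and `t * (1 - s) / (1 - t * s)`; the case `s = 1`, where `c = a`, is apart.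
lemma segment_inter_segment_nonempty {a a' c c' : E} (hca : c ∈ segment 𝕜 0 a)
    (hac : a' ∈ segment 𝕜 0 c') : (segment 𝕜 a a' ∩ segment 𝕜 c c').Nonempty := by
  obtain ⟨s, ⟨hs0, hs1⟩, rfl⟩ := mem_segment_zero_iff_exists_smul.1 hca
  obtain ⟨t, ⟨ht0, ht1⟩, rfl⟩ := mem_segment_zero_iff_exists_smul.1 hac
  rcases hs1.eq_or_lt with rfl | hs1
  · exact ⟨a, left_mem_segment 𝕜 _ _, by simpa using left_mem_segment 𝕜 _ _⟩
  have hts : t * s ≤ s := mul_le_of_le_one_left hs0 ht1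
  have hd : 0 < 1 - t * s := by linarith
  set k := (1 - s) / (1 - t * s)
  have hk0 : 0 ≤ k := div_nonneg (by linarith) hd.le
  have hk1 : k ≤ 1 := div_le_one_of_le₀ (by linarith) hd.le
  have hkd : k * (1 - t * s) = 1 - s := div_mul_cancel₀ _ hd.ne'
  refine ⟨(1 - k) • a + k • t • c', ⟨1 - k, k, by linarith, hk0, by ring, rfl⟩,
    1 - k * t, k * t, ?_, mul_nonneg hk0 ht0, by ring, ?_⟩
  · linarith [mul_le_one₀ hk1 ht0 ht1]
  · rw [smul_smul, smul_smul, show (1 - k * t) * s = 1 - k by linear_combination hkd]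

lemma not_disjoint_convexHull_of_mem_segment {A C : Set E} {a a' c c' : E} (ha : a ∈ A)
    (ha' : a' ∈ A) (hc : c ∈ C) (hc' : c' ∈ C) (hca : c ∈ segment 𝕜 0 a)
    (hac : a' ∈ segment 𝕜 0 c') : ¬ Disjoint (convexHull 𝕜 A) (convexHull 𝕜 C) := by
  obtain ⟨z, hzA, hzC⟩ := segment_inter_segment_nonempty hca hac
  exact Set.not_disjoint_iff.2
    ⟨z, segment_subset_convexHull ha ha' hzA, segment_subset_convexHull hc hc' hzC⟩

lemma disjoint_convexHull_of_forall_lt {A C : Set E} {r : 𝕜} (φ : E →ₗ[𝕜] 𝕜)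
    (hA : ∀ a ∈ A, φ a < r) (hC : ∀ c ∈ C, r < φ c) :
    Disjoint (convexHull 𝕜 A) (convexHull 𝕜 C) := by
  have hA_lt : convexHull 𝕜 A ⊆ {z | φ z < r} :=
    convexHull_min hA (convex_halfSpace_lt φ.isLinear r)
  have hC_gt : convexHull 𝕜 C ⊆ {z | r < φ z} :=
    convexHull_min hC (convex_halfSpace_gt φ.isLinear r)
  exact Set.disjoint_left.2 fun z hzA hzC => lt_asymm (hA_lt hzA) (hC_gt hzC)

/-- The union of the nonnegative real and nonnegative imaginary half-axes, which carries the cone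
configurations. -/
def nonnegAxes : Set ℂ := {z | 0 ≤ z.re ∧ 0 ≤ z.im ∧ (z.re = 0 ∨ z.im = 0)}

lemma mem_segment_zero_iff_of_mem_nonnegAxes {z w : ℂ} (hz : z ∈ nonnegAxes)
    (hw : w ∈ nonnegAxes) : z ∈ segment ℝ 0 w ↔ z.re ≤ w.re ∧ z.im ≤ w.im := by
  obtain ⟨hz_re, hz_im, -⟩ := hz
  obtain ⟨hw_re, hw_im, hw_axes⟩ := hw
  rw [mem_segment_zero_iff_exists_smul]
  constructor
  · rintro ⟨t, ⟨-, ht1⟩, rfl⟩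
    simpa using ⟨mul_le_of_le_one_left hw_re ht1, mul_le_of_le_one_left hw_im ht1⟩
  · rintro ⟨h_re, h_im⟩
    rcases hw_axes with hw0 | hw0
    · have hz0 : z.re = 0 := le_antisymm (hw0 ▸ h_re) hz_re
      refine ⟨z.im / w.im, ⟨by positivity, div_le_one_of_le₀ h_im hw_im⟩, ?_⟩
      have : z.im / w.im * w.im = z.im :=
        div_mul_cancel_of_imp fun h => le_antisymm (h ▸ h_im) hz_im
      apply Complex.ext <;> simp [hz0, hw0, this]
    · have hz0 : z.im = 0 := le_antisymm (hw0 ▸ h_im) hz_im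
      refine ⟨z.re / w.re, ⟨by positivity, div_le_one_of_le₀ h_re hw_re⟩, ?_⟩
      have : z.re / w.re * w.re = z.re :=
        div_mul_cancel_of_imp fun h => le_antisymm (h ▸ h_re) hz_re
      apply Complex.ext <;> simp [hz0, hw0, this]

lemma exists_pos_between {α β : Type*} [LinearOrder β] [Zero β] [DenselyOrdered β] [NoMinOrder β]
    [NoMaxOrder β] {A C : Set α} (hA : A.Finite) (hC : C.Finite) (g : α → β)
    (h : ∀ a ∈ A, ∀ c ∈ C, 0 < g c → g a < g c) :
    ∃ p, 0 < p ∧ (∀ a ∈ A, g a < p) ∧ ∀ c ∈ C, 0 < g c → p < g c := by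
  classical
  obtain ⟨p, hlo, hhi⟩ := Order.exists_between_finsets
    (insert 0 (hA.toFinset.image g)) ((hC.toFinset.image g).filter (0 < ·)) (by
      simp only [mem_insert, mem_image, mem_filter, Set.Finite.mem_toFinset]
      rintro _ (rfl | ⟨a, ha, rfl⟩) _ ⟨⟨c, hc, rfl⟩, hpos⟩
      exacts [hpos, h a ha c hc hpos])
  simp only [mem_insert, mem_image, mem_filter, Set.Finite.mem_toFinset] at hlo hhi
  exact ⟨p, hlo 0 (.inl rfl), fun a ha => hlo _ (.inr ⟨a, ha, rfl⟩),
    fun c hc hpos => hhi _ ⟨⟨c, hc, rfl⟩, hpos⟩⟩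

-- A line through `p` and `q * I` separates `A` from `C`, where `p` and `q` lie beyond all points of
-- `A` but before all nonzero points of `C` on their half-axes.
lemma disjoint_convexHull_of_notMem_segment {A C : Set ℂ} (hA : A.Finite) (hC : C.Finite)
    (hA_axes : A ⊆ nonnegAxes) (hC_axes : C ⊆ nonnegAxes) (hA_ne : A.Nonempty)
    (h : ∀ a ∈ A, ∀ c ∈ C, c ∉ segment ℝ 0 a) :
    Disjoint (convexHull ℝ A) (convexHull ℝ C) := by
  have not_le {a c : ℂ} (ha : a ∈ A) (hc : c ∈ C) : ¬ (c.re ≤ a.re ∧ c.im ≤ a.im) :=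
    (mem_segment_zero_iff_of_mem_nonnegAxes (hC_axes hc) (hA_axes ha)).not.1 (h a ha c hc)
  obtain ⟨p, hp, hAp, hCp⟩ := exists_pos_between hA hC Complex.re
    fun a ha c hc hpos => by
      by_contra! hca
      exact not_le ha hc ⟨hca, ((hC_axes hc).2.2.resolve_left hpos.ne').trans_le (hA_axes ha).2.1⟩
  obtain ⟨q, hq, hAq, hCq⟩ := exists_pos_between hA hC Complex.im
    fun a ha c hc hpos => by
      by_contra! hca
      exact not_le ha hc ⟨((hC_axes hc).2.2.resolve_right hpos.ne').trans_le (hA_axes ha).1, hca⟩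
  let φ : ℂ →ₗ[ℝ] ℝ := q • Complex.reLm + p • Complex.imLm
  have hφ (z : ℂ) : φ z = q * z.re + p * z.im := by simp [φ]
  refine disjoint_convexHull_of_forall_lt (r := p * q) φ (fun a ha => ?_) fun c hc => ?_
  · rw [hφ]
    rcases (hA_axes ha).2.2 with h0 | h0
    · simpa [h0] using mul_lt_mul_of_pos_left (hAq a ha) hp
    · simpa [h0, mul_comm] using mul_lt_mul_of_pos_left (hAp a ha) hq
  · obtain ⟨a, ha⟩ := hA_ne
    have hpos : 0 < c.re ∨ 0 < c.im := by
      by_contra! hle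
      exact not_le ha hc ⟨hle.1.trans (hA_axes ha).1, hle.2.trans (hA_axes ha).2.1⟩
    rw [hφ]
    rcases hpos with hpos | hpos
    · linarith [mul_lt_mul_of_pos_left (hCp c hc hpos) hq, mul_nonneg hp.le (hC_axes hc).2.1]
    · linarith [mul_lt_mul_of_pos_left (hCq c hc hpos) hp, mul_nonneg hq.le (hC_axes hc).1]

end Geometry

section ConeEmbedding

variable {ι : Type*}

/-- A family of points on the half-axes whose index set is ordered by `x ≤ y ↔ f x ∈ [0, f y]`. -/
structure IsConeEmbedding [LE ι] (f : ι → ℂ) : Prop where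
  mem_nonnegAxes : ∀ x, f x ∈ nonnegAxes
  mem_segment_iff : ∀ x y, f x ∈ segment ℝ 0 (f y) ↔ x ≤ y

lemma IsConeEmbedding.injective [PartialOrder ι] {f : ι → ℂ} (hf : IsConeEmbedding f) :
    Injective f := fun x y h =>
  le_antisymm ((hf.mem_segment_iff x y).1 (h ▸ right_mem_segment ℝ 0 (f x)))
    ((hf.mem_segment_iff y x).1 (h ▸ right_mem_segment ℝ 0 (f x)))

lemma IsConeEmbedding.withBot [LE ι] {f : ι → ℂ} (hf : IsConeEmbedding f) (hf0 : ∀ x, f x ≠ 0) :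
    IsConeEmbedding (WithBot.recBotCoe 0 f : WithBot ι → ℂ) where
  mem_nonnegAxes x := by
    induction x with
    | bot => simp [nonnegAxes]
    | coe x => exact hf.mem_nonnegAxes x
  mem_segment_iff x y := by
    induction x with
    | bot => simp [left_mem_segment]
    | coe x =>
      induction y with
      | bot => simp [hf0]
      | coe y => simpa using hf.mem_segment_iff x y

lemma IsConeEmbedding.mem_orderNC_iff [LE ι] [Finite ι] {f : ι → ℂ} (hf : IsConeEmbedding f)
    {r : Setoid ι} : r ∈ orderNC ι ↔ ∀ x y, ¬ r x y →
      Disjoint (convexHull ℝ (f '' {z | r x z})) (convexHull ℝ (f '' {z | r y z})) := by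
  constructor
  · intro hr x y hxy
    have disjoint_of_not_le (x y : ι) (h : ∀ a, r x a → ∀ c, r y c → ¬ c ≤ a) :
        Disjoint (convexHull ℝ (f '' {z | r x z})) (convexHull ℝ (f '' {z | r y z})) := by
      refine disjoint_convexHull_of_notMem_segment (Set.toFinite _) (Set.toFinite _)
        ?_ ?_ ⟨f x, x, r.refl' x, rfl⟩ ?_
      · exact Set.image_subset_iff.2 fun z _ => hf.mem_nonnegAxes z
      · exact Set.image_subset_iff.2 fun z _ => hf.mem_nonnegAxes z
      · rintro _ ⟨a, ha, rfl⟩ _ ⟨c, hc, rfl⟩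
        exact (hf.mem_segment_iff c a).not.2 (h a ha c hc)
    by_cases h : ∀ a, r x a → ∀ c, r y c → ¬ c ≤ a
    · exact disjoint_of_not_le x y h
    · push Not at h
      obtain ⟨a, ha, c, hc, hca⟩ := h
      refine (disjoint_of_not_le y x fun c' hc' a' ha' hac => hxy ?_).symm
      have hac : r a c := hr (r.trans' (r.symm' ha) ha') (r.trans' (r.symm' hc) hc') hca hac
      exact r.trans' ha (r.trans' hac (r.symm' hc))
  · intro h a a' c c' ha hc hca hac
    by_contra hne
    have mem_image {x y : ι} (h : r x y) : f y ∈ f '' {z | r x z} := Set.mem_image_of_mem f h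
    exact not_disjoint_convexHull_of_mem_segment (mem_image (r.refl' a)) (mem_image ha)
      (mem_image (r.refl' c)) (mem_image hc) ((hf.mem_segment_iff c a).2 hca)
      ((hf.mem_segment_iff a' c').2 hac) (h a c hne)

lemma isNoncrossing_iff_partSetoid [Fintype ι] {f : ι → ℂ} (π : Finpartition (univ.image f)) :
    IsNoncrossing π ↔ ∀ x y, ¬ partSetoid π x y →
      Disjoint (convexHull ℝ (f '' {z | partSetoid π x z}))
        (convexHull ℝ (f '' {z | partSetoid π y z})) := by
  simp only [IsNoncrossing, Set.Pairwise, mem_coe, mem_parts_iff_exists_part, partSetoid_apply,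
    forall_exists_index, forall_apply_eq_imp_iff, coe_part_eq_image, ne_eq]

theorem IsConeEmbedding.card_NC [PartialOrder ι] [Fintype ι] {f : ι → ℂ}
    (hf : IsConeEmbedding f) : Nat.card (NC (univ.image f)) = (orderNC ι).ncard := by
  rw [← Nat.card_coe_set_eq]
  exact Nat.card_congr <|
    (Equiv.ofBijective _ ⟨partSetoid_injective, partSetoid_surjective hf.injective⟩).subtypeEquiv
      fun π => (isNoncrossing_iff_partSetoid π).trans hf.mem_orderNC_iff.symm

end ConeEmbedding

section Cone

variable {m n : ℕ}

/-- The points of the open cone configuration, indexed by the disjoint union of two chains. -/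
noncomputable def conePoint : Fin m ⊕ Fin n → ℂ :=
  Sum.elim (fun j => (j + 1 : ℕ)) fun k => (k + 1 : ℕ) * Complex.I

lemma conePoint_ne_zero (x : Fin m ⊕ Fin n) : conePoint x ≠ 0 := by
  cases x <;> simp [conePoint, Nat.cast_add_one_ne_zero]

lemma isConeEmbedding_conePoint : IsConeEmbedding (conePoint (m := m) (n := n)) := by
  have mem_nonnegAxes (x : Fin m ⊕ Fin n) : conePoint x ∈ nonnegAxes := by
    cases x <;> simp [conePoint, nonnegAxes, add_nonneg]
  refine ⟨mem_nonnegAxes, fun x y => ?_⟩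
  rw [mem_segment_zero_iff_of_mem_nonnegAxes (mem_nonnegAxes x) (mem_nonnegAxes y)]
  cases x <;> cases y <;> simp [conePoint] <;> norm_cast <;> omega

lemma image_conePoint : univ.image (conePoint (m := m) (n := n)) = Uconfig m n := by
  have exists_fin {N : ℕ} (g : ℕ → ℂ) (z : ℂ) :
      (∃ i : Fin N, g (i + 1) = z) ↔ ∃ j, (1 ≤ j ∧ j ≤ N) ∧ g j = z := by
    constructor
    · rintro ⟨i, rfl⟩
      exact ⟨i + 1, by omega, rfl⟩
    · rintro ⟨j, hj, rfl⟩
      exact ⟨⟨j - 1, by omega⟩, by simp [Nat.sub_add_cancel hj.1]⟩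
  ext z
  simp [conePoint, Uconfig, ← exists_fin, -Nat.cast_add]

theorem card_NC_Uconfig (m n : ℕ) :
    Nat.card (NC (Uconfig m n)) = (orderNC (Fin m ⊕ Fin n)).ncard := by
  rw [← image_conePoint, isConeEmbedding_conePoint.card_NC]

theorem card_NC_Vconfig (m n : ℕ) :
    Nat.card (NC (Vconfig m n)) = (orderNC (WithBot (Fin m ⊕ Fin n))).ncard := by
  have image_eq : univ.image (WithBot.recBotCoe 0 (conePoint (m := m) (n := n))) = Vconfig m n := by
    rw [Vconfig, ← image_conePoint]
    ext z
    simp [WithBot.exists, eq_comm]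
  rw [← image_eq, (isConeEmbedding_conePoint.withBot conePoint_ne_zero).card_NC]

end Cone

section Merge

lemma ncard_orderNC_contract_sum {A A' B B' : Type*} [Preorder A] [Preorder B] [Preorder A']
    [Preorder B'] (e : A' ↪o A) (e' : B' ↪o B) (he : IsUpperSet (Set.range e))
    (he' : IsUpperSet (Set.range e')) :
    {r ∈ orderNC (WithBot (A ⊕ B)) | (∀ x ∉ Set.range e, r ⊥ (Sum.inl x : A ⊕ B)) ∧
      ∀ y ∉ Set.range e', r ⊥ (Sum.inr y : A ⊕ B)}.ncard =
    (orderNC (WithBot (A' ⊕ B'))).ncard := by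
  let s : A' ⊕ B' ↪o A ⊕ B := RelEmbedding.sumLiftRelMap e e'
  have coe_s : ⇑s = Sum.map e e' := rfl
  have upper : IsUpperSet (Set.range s) := by
    rintro _ y hxy ⟨x | x, rfl⟩ <;> cases y
    · obtain ⟨z, rfl⟩ := he (Sum.inl_le_inl_iff.1 hxy) ⟨x, rfl⟩
      exact ⟨.inl z, rfl⟩
    · exact (Sum.not_inl_le_inr hxy).elim
    · exact (Sum.not_inr_le_inl hxy).elim
    · obtain ⟨z, rfl⟩ := he' (Sum.inr_le_inr_iff.1 hxy) ⟨x, rfl⟩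
      exact ⟨.inr z, rfl⟩
  rw [← ncard_orderNC_contract s upper]
  simp [coe_s]

lemma isUpperSet_range_succOrderEmb (k : ℕ) : IsUpperSet (Set.range (Fin.succOrderEmb k)) := by
  rw [Fin.coe_succOrderEmb, Fin.range_succ]
  exact fun x y hxy hx hy => hx (le_antisymm (hxy.trans_eq hy) (Fin.zero_le x))

variable (m n : ℕ) (A : Type*) [Preorder A]

lemma ncard_orderNC_merge_inl :
    {r ∈ orderNC (WithBot (Fin (m + 1) ⊕ A)) | r ⊥ (Sum.inl 0 : Fin (m + 1) ⊕ A)}.ncard =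
      (orderNC (WithBot (Fin m ⊕ A))).ncard := by
  simpa [Fin.range_succ] using ncard_orderNC_contract_sum (Fin.succOrderEmb m)
    (RelEmbedding.refl (α := A) (· ≤ ·)) (isUpperSet_range_succOrderEmb m)
    (by simp [isUpperSet_univ])

lemma ncard_orderNC_merge_inr :
    {r ∈ orderNC (WithBot (A ⊕ Fin (n + 1))) | r ⊥ (Sum.inr 0 : A ⊕ Fin (n + 1))}.ncard =
      (orderNC (WithBot (A ⊕ Fin n))).ncard := by
  simpa [Fin.range_succ] using ncard_orderNC_contract_sum (RelEmbedding.refl (α := A) (· ≤ ·))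
    (Fin.succOrderEmb n) (by simp [isUpperSet_univ]) (isUpperSet_range_succOrderEmb n)

lemma ncard_orderNC_merge_inl_inr :
    {r ∈ orderNC (WithBot (Fin (m + 1) ⊕ Fin (n + 1))) |
      r ⊥ (Sum.inl 0 : Fin (m + 1) ⊕ Fin (n + 1)) ∧
        r ⊥ (Sum.inr 0 : Fin (m + 1) ⊕ Fin (n + 1))}.ncard =
      (orderNC (WithBot (Fin m ⊕ Fin n))).ncard := by
  simpa [Fin.range_succ, -Set.sep_and] using ncard_orderNC_contract_sum (Fin.succOrderEmb m)
    (Fin.succOrderEmb n) (isUpperSet_range_succOrderEmb m) (isUpperSet_range_succOrderEmb n)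

end Merge

/-- For `m, n ≥ 1`, `v_{m,n} = u_{m,n} + v_{m-1,n} + v_{m,n-1} - v_{m-1,n-1}`, where
`u_{m,n} = |NC(U_{m,n})|` and `v_{m,n} = |NC(V_{m,n})|`. -/
theorem nc_V_card_recursion (m n : ℕ) (hm : 1 ≤ m) (hn : 1 ≤ n) :
    (Nat.card (NC (Vconfig m n)) : ℤ) =
      (Nat.card (NC (Uconfig m n)) : ℤ) + (Nat.card (NC (Vconfig (m - 1) n)) : ℤ) +
        (Nat.card (NC (Vconfig m (n - 1))) : ℤ) -
          (Nat.card (NC (Vconfig (m - 1) (n - 1))) : ℤ) := by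
  obtain ⟨m, rfl⟩ := Nat.exists_eq_add_of_le' hm
  obtain ⟨n, rfl⟩ := Nat.exists_eq_add_of_le' hn
  have inclusion_exclusion :=
    ncard_orderNC_withBot (a := (Sum.inl 0 : Fin (m + 1) ⊕ Fin (n + 1))) (b := Sum.inr 0) (by simp)
  rw [ncard_orderNC_merge_inl, ncard_orderNC_merge_inr, ncard_orderNC_merge_inl_inr]
    at inclusion_exclusion
  simp only [Nat.add_sub_cancel, card_NC_Uconfig, card_NC_Vconfig]
  omega
end
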